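/- arXiv:2605.18598 — 2 statements merged into one kernel-verified Lean document; each statement's English description precedes it below -/
import Mathlib

section
/- Pointwise Generalization via Ghost Sample (Theorem: swap-invariant priors). There is an absolute constant C > 0 with the following property. Let ℓ : F × Z → [0,1] be jointly measurable, and let S = (z_1,…,z_n) and S' = (z'_1,…,z'_n) be mutually independent i.i.d. samples from a probability measure P on Z. Let (S,S') ↦ π_{(S,S')} be a measurable assignment of probability measures on F that is swap-invariant: π_{(S,S')} = π_{τ_i(S,S')} for every i ∈ {1,…,n}, where τ_i(S,S') exchanges z_i and z'_i. Then for every δ ∈ (0,1), with probability at least 1 − δ over (S,S'), simultaneously for every f ∈ F: (1/n)Σ_{i=1}^n ℓ(f;z'_i) − (1/n)Σ_{i=1}^n ℓ(f;z_i) ≤ C · ( inf_{α ≥ 0} { α + (1/√n) ∫_α^{√2} √( log(1/π_{(S,S')}(B_{ρ_{(S,S'),ℓ}}(f,ε))) ) dε } + √( log(log(2n)/δ)/n ) ), where all displayed suprema, infima and integrands are assumed measurable. -/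
open MeasureTheory
open scoped ENNReal NNReal

noncomputable section

/-- The pointwise dimension `log(1/p)` of a (probability) mass `p`, valued in `[0,∞]`,
with the convention `log(1/0) = ∞`. -/
def negLog (p : ℝ≥0∞) : ℝ≥0∞ :=
  if p = 0 then ⊤ else ENNReal.ofReal (Real.log (1 / p.toReal))

/-- Ball of radius `ε` around `f` for a (semi-)metric `ρ`. -/
def mball {F : Type*} (ρ : F → F → ℝ) (f : F) (ε : ℝ) : Set F := {f' | ρ f f' ≤ ε}

/-- The mixed empirical–ghost metric
`ρ_{(S,S'),ℓ}(f₁,f₂) = √((1/n) Σᵢ [(ℓ f₁ zᵢ − ℓ f₂ zᵢ)² + (ℓ f₁ z'ᵢ − ℓ f₂ z'ᵢ)²])`. -/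
def mixedMetric {F Z : Type*} {n : ℕ} (ℓ : F → Z → ℝ) (S S' : Fin n → Z)
    (f₁ f₂ : F) : ℝ :=
  Real.sqrt ((∑ i, ((ℓ f₁ (S i) - ℓ f₂ (S i)) ^ 2 + (ℓ f₁ (S' i) - ℓ f₂ (S' i)) ^ 2)) / n)

def sg (b : Bool) : ℝ := if b then -1 else 1

lemma psi_step (x a w : ℝ) (h : a ^ 2 < w) :
    Real.exp ((x + a) ^ 2 / (2 * w)) + Real.exp ((x - a) ^ 2 / (2 * w)) ≤
      2 * (Real.sqrt (w / (w - a ^ 2)) * Real.exp (x ^ 2 / (2 * (w - a ^ 2)))) := by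
  have hw : 0 < w := lt_of_le_of_lt (sq_nonneg a) h
  have hd : 0 < w - a ^ 2 := by linarith
  have e1 : Real.exp ((x + a) ^ 2 / (2 * w)) + Real.exp ((x - a) ^ 2 / (2 * w)) =
      2 * (Real.exp ((x ^ 2 + a ^ 2) / (2 * w)) * Real.cosh (x * a / w)) := by
    rw [Real.cosh_eq]
    have : ∀ A B C : ℝ, 2 * (A * ((B + C) / 2)) = A * B + A * C := by intros; ring
    rw [this, ← Real.exp_add, ← Real.exp_add]
    congr 2 <;> field_simp <;> ring
  rw [e1]
  refine mul_le_mul_of_nonneg_left ?_ (by norm_num)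
  have e2 := Real.cosh_le_exp_half_sq (x * a / w)
  have e3 : Real.exp (a ^ 2 / (2 * w)) ≤ Real.sqrt (w / (w - a ^ 2)) := by
    apply Real.le_sqrt_of_sq_le
    rw [← Real.exp_nat_mul, le_div_iff₀ hd]
    have := Real.add_one_le_exp (-(a ^ 2 / w))
    have h2 : w - a ^ 2 ≤ w * Real.exp (-(a ^ 2 / w)) := by
      have := mul_le_mul_of_nonneg_left this hw.le
      calc w - a ^ 2 = w * (-(a ^ 2 / w) + 1) := by field_simp; ring
        _ ≤ _ := this
    have h3 : ((2 : ℕ) : ℝ) * (a ^ 2 / (2 * w)) = a ^ 2 / w := by push_cast; field_simp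
    rw [h3]
    calc Real.exp (a ^ 2 / w) * (w - a ^ 2) ≤ Real.exp (a ^ 2 / w) * (w * Real.exp (-(a ^ 2 / w))) := by gcongr
      _ = w * Real.exp (a ^ 2 / w + -(a ^ 2 / w)) := by rw [Real.exp_add]; ring
      _ = w := by simp
  have e4 : x ^ 2 / (2 * w) + (x * a / w) ^ 2 / 2 ≤ x ^ 2 / (2 * (w - a ^ 2)) := by
    have : x ^ 2 / (2 * w) + (x * a / w) ^ 2 / 2 = x ^ 2 * (w + a ^ 2) / (2 * w ^ 2) := by
      field_simp
    rw [this, div_le_div_iff₀ (by positivity) (by positivity)]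
    nlinarith [mul_nonneg (sq_nonneg x) (sq_nonneg (a ^ 2))]
  calc Real.exp ((x ^ 2 + a ^ 2) / (2 * w)) * Real.cosh (x * a / w)
      ≤ Real.exp ((x ^ 2 + a ^ 2) / (2 * w)) * Real.exp ((x * a / w) ^ 2 / 2) := by gcongr
    _ = Real.exp (a ^ 2 / (2 * w)) * Real.exp (x ^ 2 / (2 * w) + (x * a / w) ^ 2 / 2) := by
        rw [← Real.exp_add, ← Real.exp_add]; congr 1; ring
    _ ≤ _ := by gcongr

lemma psi_avg : ∀ (n : ℕ) (a : Fin n → ℝ) (x w : ℝ), ∑ i, a i ^ 2 < w →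
    ∑ σ : Fin n → Bool, Real.exp ((x + ∑ i, sg (σ i) * a i) ^ 2 / (2 * w)) ≤
      2 ^ n * (Real.sqrt (w / (w - ∑ i, a i ^ 2)) *
        Real.exp (x ^ 2 / (2 * (w - ∑ i, a i ^ 2)))) := by
  intro n
  induction n with
  | zero =>
    intro a x w h
    simp at h
    simp [div_self h.ne']
  | succ n ih =>
    intro a x w h
    rw [Fin.sum_univ_succ] at h ⊢
    set A := ∑ i : Fin n, a i.succ ^ 2 with hA
    have hA0 : 0 ≤ A := Finset.sum_nonneg fun i _ => sq_nonneg _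
    have hAw : A < w := by nlinarith [sq_nonneg (a 0)]
    have key : ∀ b : Bool, ∑ τ : Fin n → Bool,
        Real.exp (((x + sg b * a 0) + ∑ i, sg (τ i) * a i.succ) ^ 2 / (2 * w)) ≤
        2 ^ n * (Real.sqrt (w / (w - A)) * Real.exp ((x + sg b * a 0) ^ 2 / (2 * (w - A)))) :=
      fun b => ih (fun i => a i.succ) (x + sg b * a 0) w hAw
    have e : ∑ σ : Fin (n + 1) → Bool, Real.exp ((x + ∑ i, sg (σ i) * a i) ^ 2 / (2 * w)) =
        ∑ b : Bool, ∑ τ : Fin n → Bool,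
          Real.exp (((x + sg b * a 0) + ∑ i, sg (τ i) * a i.succ) ^ 2 / (2 * w)) := by
      rw [← Fintype.sum_prod_type', ← (Fin.consEquiv (fun _ : Fin (n + 1) => Bool)).sum_comp]
      refine Finset.sum_congr rfl fun p _ => ?_
      simp [Fin.consEquiv, Fin.sum_univ_succ, add_assoc]
    rw [e, Fintype.sum_bool]
    have k1 := key true
    have k2 := key false
    have st := psi_step x (a 0) (w - A) (by linarith)
    simp only [sg, if_true, Bool.false_eq_true, if_false, neg_mul, one_mul, ← sub_eq_add_neg] at k1 k2 ⊢
    have hd : 0 < w - A - a 0 ^ 2 := by linarith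
    have hr : w - (a 0 ^ 2 + A) = w - A - a 0 ^ 2 := by ring
    have hs : Real.sqrt (w / (w - A - a 0 ^ 2)) =
        Real.sqrt (w / (w - A)) * Real.sqrt ((w - A) / (w - A - a 0 ^ 2)) := by
      rw [← Real.sqrt_mul (by apply div_nonneg <;> linarith)]
      congr 1
      have : w - A ≠ 0 := by linarith
      field_simp
    rw [hr, hs]
    have := mul_le_mul_of_nonneg_left st
      (show 0 ≤ 2 ^ n * Real.sqrt (w / (w - A)) by positivity)
    rw [pow_succ]
    nlinarith [this, k1, k2]

lemma psi_bound (n : ℕ) (a : Fin n → ℝ) (A : ℝ) (hA : 0 < A) (h : ∑ i, a i ^ 2 ≤ A) :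
    ∑ σ : Fin n → Bool, Real.exp ((∑ i, sg (σ i) * a i) ^ 2 / (4 * A)) ≤
      2 ^ n * Real.sqrt 2 := by
  have := psi_avg n a 0 (2 * A) (by linarith)
  simp only [zero_add] at this
  have e : 2 * (2 * A) = 4 * A := by ring
  rw [e] at this
  refine this.trans ?_
  simp
  rw [div_le_iff₀ (by linarith)]
  linarith

def swp {Z : Type*} {n : ℕ} (σ : Fin n → Bool) (p : (Fin n → Z) × (Fin n → Z)) :
    (Fin n → Z) × (Fin n → Z) :=
  (fun i => if σ i then p.2 i else p.1 i, fun i => if σ i then p.1 i else p.2 i)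

lemma swp_mp {Z : Type*} [MeasurableSpace Z] (P : Measure Z) [IsProbabilityMeasure P] {n : ℕ}
    (σ : Fin n → Bool) :
    MeasurePreserving (swp (Z := Z) σ)
      ((Measure.pi fun _ : Fin n => P).prod (Measure.pi fun _ : Fin n => P))
      ((Measure.pi fun _ : Fin n => P).prod (Measure.pi fun _ : Fin n => P)) := by
  have h1 := measurePreserving_arrowProdEquivProdArrow Z Z (Fin n) (fun _ => P) (fun _ => P)
  have h2 : MeasurePreserving
      (fun (q : Fin n → Z × Z) i => (if σ i then Prod.swap else id) (q i))
      (Measure.pi fun _ => P.prod P) (Measure.pi fun _ => P.prod P) := by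
    refine measurePreserving_pi _ _ (f := fun i => (if σ i then Prod.swap else id)) fun i => ?_
    by_cases h : σ i
    · simp only [h, if_true]
      exact Measure.measurePreserving_swap
    · simp only [h]
      exact MeasurePreserving.id _
  have h3 := (h1.comp h2).comp (h1.symm)
  convert! h3 using 1
  funext p
  refine Prod.ext ?_ ?_ <;> funext i <;> by_cases h : σ i <;>
    simp [swp, h, MeasurableEquiv.arrowProdEquivProdArrow, Equiv.arrowProdEquivProdArrow]

lemma swp_pi {Z F : Type*} [MeasurableSpace F] {n : ℕ}
    (π : (Fin n → Z) → (Fin n → Z) → Measure F)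
    (h : ∀ (S S' : Fin n → Z) (i : Fin n),
          π S S' = π (Function.update S i (S' i)) (Function.update S' i (S i)))
    (σ : Fin n → Bool) (p : (Fin n → Z) × (Fin n → Z)) :
    π (swp σ p).1 (swp σ p).2 = π p.1 p.2 := by
  have key : ∀ s : Finset (Fin n),
      π (swp (fun i => decide (i ∈ s)) p).1 (swp (fun i => decide (i ∈ s)) p).2 = π p.1 p.2 := by
    intro s
    induction s using Finset.induction_on with
    | empty => simp [swp]
    | insert a s ha ih =>
      rw [← ih, h (swp (fun i => decide (i ∈ s)) p).1 _ a]
      congr 1 <;> funext i <;> by_cases hi : i = a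
      · subst hi; simp [swp, ha]
      · simp [swp, hi, Function.update_of_ne]
      · subst hi; simp [swp, ha]
      · simp [swp, hi, Function.update_of_ne]
  have := key (Finset.univ.filter fun i => σ i = true)
  simpa using this

lemma swp_metric {Z F : Type*} {n : ℕ} (ℓ : F → Z → ℝ)
    (σ : Fin n → Bool) (p : (Fin n → Z) × (Fin n → Z)) :
    mixedMetric ℓ (swp σ p).1 (swp σ p).2 = mixedMetric ℓ p.1 p.2 := by
  funext f g
  unfold mixedMetric
  congr 2
  refine Finset.sum_congr rfl fun i _ => ?_
  by_cases h : σ i <;> simp [swp, h, add_comm]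

lemma swp_sum {Z F : Type*} {n : ℕ} (ℓ : F → Z → ℝ)
    (σ : Fin n → Bool) (p : (Fin n → Z) × (Fin n → Z)) (f : F) :
    (∑ i, ℓ f ((swp σ p).2 i)) / n - (∑ i, ℓ f ((swp σ p).1 i)) / n =
      (∑ i, sg (σ i) * (ℓ f (p.2 i) - ℓ f (p.1 i))) / n := by
  rw [← sub_div, ← Finset.sum_sub_distrib]
  congr 1
  refine Finset.sum_congr rfl fun i _ => ?_
  by_cases h : σ i <;> simp [swp, h, sg]

lemma orbit {Z : Type*} [MeasurableSpace Z] (P : Measure Z) [IsProbabilityMeasure P] {n : ℕ}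
    (G : Set ((Fin n → Z) × (Fin n → Z))) (δ : ℝ)
    (H : ∀ p, ∃ s : Finset (Fin n → Bool), (∀ σ ∈ s, swp σ p ∈ G) ∧ (1 - δ) * 2 ^ n ≤ s.card) :
    ENNReal.ofReal (1 - δ) ≤
      ((Measure.pi fun _ : Fin n => P).prod (Measure.pi fun _ : Fin n => P)) G := by
  set μ := ((Measure.pi fun _ : Fin n => P).prod (Measure.pi fun _ : Fin n => P)) with hμ
  rw [← measure_toMeasurable G]
  set M := toMeasurable μ G
  have hM : MeasurableSet M := measurableSet_toMeasurable _ _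
  have hGM : G ⊆ M := subset_toMeasurable _ _
  have e1 : ∀ σ : Fin n → Bool, ∫⁻ p, M.indicator 1 (swp σ p) ∂μ = μ M := by
    intro σ
    rw [(swp_mp P σ).lintegral_comp (measurable_one.indicator hM)]
    exact lintegral_indicator_one hM
  have e2 : ∑ σ : Fin n → Bool, ∫⁻ p, M.indicator 1 (swp σ p) ∂μ = 2 ^ n * μ M := by
    simp [e1]
  have hme : ∀ σ : Fin n → Bool, Measurable fun p => M.indicator (1 : (Fin n → Z) × (Fin n → Z) → ℝ≥0∞) (swp σ p) :=
    fun σ => (measurable_one.indicator hM).comp (swp_mp P σ).measurable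
  rw [← lintegral_finsetSum _ (fun σ _ => hme σ)] at e2
  have e3 : ENNReal.ofReal ((1 - δ) * 2 ^ n) ≤ 2 ^ n * μ M := by
    rw [← e2]
    calc ENNReal.ofReal ((1 - δ) * 2 ^ n) = ∫⁻ p, ENNReal.ofReal ((1 - δ) * 2 ^ n) ∂μ := by simp
      _ ≤ _ := by
        refine lintegral_mono fun p => ?_
        obtain ⟨s, hs, hc⟩ := H p
        calc ENNReal.ofReal ((1 - δ) * 2 ^ n) ≤ ENNReal.ofReal (s.card : ℝ) :=
              ENNReal.ofReal_le_ofReal hc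
          _ = (s.card : ℝ≥0∞) := by simp
          _ = ∑ σ ∈ s, (1 : ℝ≥0∞) := by simp
          _ = ∑ σ ∈ s, M.indicator 1 (swp σ p) :=
              Finset.sum_congr rfl fun σ hσ => by simp [hGM (hs σ hσ)]
          _ ≤ _ := Finset.sum_le_sum_of_subset (Finset.subset_univ s)
  rw [mul_comm, ENNReal.ofReal_mul (by positivity),
    ENNReal.ofReal_pow (by norm_num), ENNReal.ofReal_ofNat] at e3
  exact (ENNReal.mul_le_mul_iff_right (by simp) (by simp)).1 e3

lemma ennreal_iInf_help {a b c : ℝ≥0∞} {x : ℝ → ℝ≥0∞} (hc : c ≠ 0) (hc' : c ≠ ⊤)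
    (h : ∀ α : ℝ, 0 ≤ α → a ≤ c * (x α + b)) : a ≤ c * ((⨅ (α : ℝ) (_ : 0 ≤ α), x α) + b) := by
  rw [← ENNReal.div_le_iff' hc hc', ← tsub_le_iff_right]
  refine le_iInf₂ fun α hα => ?_
  rw [tsub_le_iff_right, ENNReal.div_le_iff' hc hc']
  exact h α hα

def rad {n : ℕ} (σ : Fin n → Bool) (a : Fin n → ℝ) : ℝ := ∑ i, sg (σ i) * a i

lemma abs_sg (b : Bool) : |sg b| = 1 := by cases b <;> simp [sg]

lemma rad_le {n : ℕ} (σ : Fin n → Bool) (a : Fin n → ℝ) (c : ℝ) (h : ∀ i, |a i| ≤ c) :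
    |rad σ a| ≤ n * c := by
  unfold rad
  calc |∑ i, sg (σ i) * a i| ≤ ∑ i, |sg (σ i) * a i| := Finset.abs_sum_le_sum_abs _ _
    _ ≤ ∑ i : Fin n, c := Finset.sum_le_sum fun i _ => by rw [abs_mul, abs_sg, one_mul]; exact h i
    _ = n * c := by simp

lemma rad_sub {n : ℕ} (σ : Fin n → Bool) (a b : Fin n → ℝ) :
    rad σ (fun i => a i - b i) = rad σ a - rad σ b := by
  simp [rad, mul_sub, Finset.sum_sub_distrib]

lemma rad_meas {Ω : Type*} [MeasurableSpace Ω] {n : ℕ} (σ : Fin n → Bool) (a : Ω → Fin n → ℝ)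
    (h : ∀ i, Measurable fun ω => a ω i) : Measurable fun ω => rad σ (a ω) := by
  unfold rad
  exact Finset.measurable_fun_sum _ fun i _ => (h i).const_mul _

lemma exp_int {Ω : Type*} [MeasurableSpace Ω] (Q : Measure Ω) [IsFiniteMeasure Q]
    (Y : Ω → ℝ) (hY : Measurable Y) (b A : ℝ) (hb : ∀ ω, |Y ω| ≤ b) (hA : 0 < A) :
    Integrable (fun ω => Real.exp (Y ω ^ 2 / (4 * A))) Q := by
  refine Integrable.of_bound (C := Real.exp (b ^ 2 / (4 * A))) ?_ ?_
  · exact (Real.measurable_exp.comp ((hY.pow_const 2).div_const _)).aestronglyMeasurable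
  · refine Filter.Eventually.of_forall fun ω => ?_
    rw [Real.norm_eq_abs, Real.abs_exp]
    have : Y ω ^ 2 ≤ b ^ 2 := by rw [← sq_abs]; exact pow_le_pow_left₀ (abs_nonneg _) (hb ω) 2
    gcongr

lemma bdd_int {Ω : Type*} [MeasurableSpace Ω] (Q : Measure Ω) [IsFiniteMeasure Q]
    (Y : Ω → ℝ) (hY : Measurable Y) (b : ℝ) (hb : ∀ ω, |Y ω| ≤ b) : Integrable Y Q :=
  Integrable.of_bound (C := b) hY.aestronglyMeasurable (Filter.Eventually.of_forall hb)

lemma Phi_sum {Ω : Type*} [MeasurableSpace Ω] (Q : Measure Ω) [IsProbabilityMeasure Q] {n : ℕ}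
    (a : Ω → Fin n → ℝ) (h : ∀ i, Measurable fun ω => a ω i) (c A : ℝ) (hc : ∀ ω i, |a ω i| ≤ c)
    (hA : 0 < A) :
    ∑ σ : Fin n → Bool, ∫ ω in {ω | ∑ i, a ω i ^ 2 ≤ A}, Real.exp (rad σ (a ω) ^ 2 / (4 * A)) ∂Q ≤
      2 ^ n * Real.sqrt 2 := by
  have hi : ∀ σ : Fin n → Bool, Integrable (fun ω => Real.exp (rad σ (a ω) ^ 2 / (4 * A)))
      (Q.restrict {ω | ∑ i, a ω i ^ 2 ≤ A}) := fun σ =>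
    exp_int _ _ (rad_meas σ a h) (n * c) A (fun ω => rad_le _ _ _ (hc ω)) hA
  have hD : MeasurableSet {ω | ∑ i, a ω i ^ 2 ≤ A} :=
    measurableSet_le (Finset.measurable_fun_sum _ fun i _ => (h i).pow_const 2) measurable_const
  rw [← integral_finsetSum _ (fun σ _ => hi σ)]
  calc _ ≤ ∫ ω in {ω | ∑ i, a ω i ^ 2 ≤ A}, (2 ^ n * Real.sqrt 2) ∂Q := by
        refine setIntegral_mono_on (integrable_finsetSum _ fun σ _ => hi σ)
          (integrable_const _) hD fun ω hω => ?_
        exact psi_bound n (a ω) A hA hω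
    _ ≤ _ := by
        rw [setIntegral_const, smul_eq_mul]
        have : Q.real {ω | ∑ i, a ω i ^ 2 ≤ A} ≤ 1 := measureReal_le_one
        have h0 : 0 ≤ 2 ^ n * Real.sqrt 2 := by positivity
        nlinarith

lemma good_set {n : ℕ} (K : ℕ) (Φ : ℕ → (Fin n → Bool) → ℝ) (h0 : ∀ k σ, 0 ≤ Φ k σ)
    (h : ∀ k, ∑ σ, Φ k σ ≤ 2 ^ n * Real.sqrt 2) (M δ : ℝ) (hM : 0 < M)
    (hK : (K + 1) * Real.sqrt 2 ≤ δ * M) :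
    ∃ s : Finset (Fin n → Bool), (∀ σ ∈ s, ∀ k ≤ K, Φ k σ ≤ M) ∧ (1 - δ) * 2 ^ n ≤ s.card := by
  classical
  set T : (Fin n → Bool) → ℝ := fun σ => ∑ k ∈ Finset.range (K + 1), Φ k σ with hT
  have hT0 : ∀ σ, 0 ≤ T σ := fun σ => Finset.sum_nonneg fun k _ => h0 k σ
  have hTs : ∑ σ, T σ ≤ 2 ^ n * (δ * M) := by
    rw [hT, Finset.sum_comm]
    calc _ ≤ ∑ k ∈ Finset.range (K + 1), 2 ^ n * Real.sqrt 2 := Finset.sum_le_sum fun k _ => h k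
      _ = 2 ^ n * ((K + 1) * Real.sqrt 2) := by simp; ring
      _ ≤ _ := by gcongr
  refine ⟨Finset.univ.filter fun σ => T σ ≤ M, ?_, ?_⟩
  · intro σ hσ k hk
    simp only [Finset.mem_filter, Finset.mem_univ, true_and] at hσ
    refine le_trans ?_ hσ
    exact Finset.single_le_sum (f := fun k => Φ k σ) (fun k _ => h0 k σ)
      (Finset.mem_range.2 (by omega))
  · have hcard := Finset.card_filter_add_card_filter_not (s := (Finset.univ : Finset (Fin n → Bool)))
      (fun σ => T σ ≤ M)
    have hu : (Finset.univ : Finset (Fin n → Bool)).card = 2 ^ n := by simp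
    rw [hu] at hcard
    have hcR : (((Finset.univ.filter fun σ => T σ ≤ M).card : ℝ)) +
      ((Finset.univ.filter fun σ => ¬ T σ ≤ M).card : ℝ) = 2 ^ n := by exact_mod_cast hcard
    have hb : ((Finset.univ.filter fun σ => ¬ T σ ≤ M).card : ℝ) * M ≤ 2 ^ n * (δ * M) := by
      refine le_trans ?_ hTs
      calc _ = ∑ σ ∈ Finset.univ.filter (fun σ => ¬ T σ ≤ M), M := by simp
        _ ≤ ∑ σ ∈ Finset.univ.filter (fun σ => ¬ T σ ≤ M), T σ := by
            refine Finset.sum_le_sum fun σ hσ => ?_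
            simp only [Finset.mem_filter, not_le] at hσ
            exact hσ.2.le
        _ ≤ _ := Finset.sum_le_sum_of_subset_of_nonneg (Finset.subset_univ _) fun σ _ _ => hT0 σ
    have : ((Finset.univ.filter fun σ => ¬ T σ ≤ M).card : ℝ) ≤ 2 ^ n * δ := by
      rw [← mul_assoc] at hb
      exact le_of_mul_le_mul_right hb hM
    linarith

lemma pair_step {Ω : Type*} [MeasurableSpace Ω] (Q : Measure Ω) [IsProbabilityMeasure Q]
    (Y : Ω → ℝ) (hY : Measurable Y) (b A M : ℝ) (hb : ∀ ω, |Y ω| ≤ b) (hA : 0 < A) (hM : 1 < M)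
    (R D : Set Ω) (hRD : R ⊆ D)
    (h : ∫ ω in D, Real.exp (Y ω ^ 2 / (4 * A)) ∂Q ≤ M) (hm : 0 < Q.real R) :
    ∫ ω in R, Y ω ∂Q ≤ Q.real R * Real.sqrt (4 * A * Real.log (M / Q.real R)) := by
  set m := Q.real R with hmdef
  have hm1 : m ≤ 1 := measureReal_le_one
  set L := Real.log (M / m) with hL
  have hMm : 1 < M / m := by rw [lt_div_iff₀ hm]; linarith
  have hL0 : 0 < L := Real.log_pos hMm
  set s := Real.sqrt (4 * A * L) with hs
  have hs0 : 0 < s := Real.sqrt_pos.2 (by positivity)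
  have hs2 : s ^ 2 = 4 * A * L := Real.sq_sqrt (by positivity)
  have hexp : Real.exp (-L) = m / M := by
    rw [hL, Real.exp_neg, Real.exp_log (by positivity), inv_div]
  have hint := exp_int (Q.restrict R) Y hY b A hb hA
  have hintD := exp_int (Q.restrict D) Y hY b A hb hA
  have hle : ∫ ω in R, Real.exp (Y ω ^ 2 / (4 * A)) ∂Q ≤ M :=
    le_trans (setIntegral_mono_set hintD
      (Filter.Eventually.of_forall fun ω => (Real.exp_pos _).le) hRD.eventuallyLE) h
  have pw : ∀ ω, Y ω ≤ (s / 2 + 4 * A / (2 * s) * (L - 1)) +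
      (4 * A / (2 * s) * (m / M)) * Real.exp (Y ω ^ 2 / (4 * A)) := by
    intro ω
    have h1 : Y ω ≤ s / 2 + Y ω ^ 2 / (2 * s) := by
      have : s / 2 + Y ω ^ 2 / (2 * s) - Y ω = (Y ω - s) ^ 2 / (2 * s) := by field_simp; ring
      have h2 : 0 ≤ (Y ω - s) ^ 2 / (2 * s) := by positivity
      linarith
    set u := Y ω ^ 2 / (4 * A) with hu
    have h3 : Y ω ^ 2 / (2 * s) = 4 * A / (2 * s) * u := by rw [hu]; field_simp
    have h4 : u ≤ (L - 1) + m / M * Real.exp u := by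
      have := Real.add_one_le_exp (u + -L)
      rw [Real.exp_add, hexp] at this
      linarith
    have h5 := mul_le_mul_of_nonneg_left h4 (show 0 ≤ 4 * A / (2 * s) by positivity)
    rw [h3] at h1
    linarith
  calc ∫ ω in R, Y ω ∂Q ≤ ∫ ω in R, ((s / 2 + 4 * A / (2 * s) * (L - 1)) +
      (4 * A / (2 * s) * (m / M)) * Real.exp (Y ω ^ 2 / (4 * A))) ∂Q :=
        integral_mono (bdd_int _ Y hY b hb) ((integrable_const _).add (hint.const_mul _)) pw
    _ = m * (s / 2 + 4 * A / (2 * s) * (L - 1)) +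
      (4 * A / (2 * s) * (m / M)) * ∫ ω in R, Real.exp (Y ω ^ 2 / (4 * A)) ∂Q := by
        rw [integral_add (integrable_const _) (hint.const_mul _), integral_const_mul,
          setIntegral_const, smul_eq_mul]
    _ ≤ m * (s / 2 + 4 * A / (2 * s) * (L - 1)) + (4 * A / (2 * s) * (m / M)) * M := by
        gcongr
    _ = m * (s / 2 + (4 * A * L) / (2 * s)) := by field_simp; ring
    _ = m * s := by rw [← hs2]; field_simp; ring

def eps (k : ℕ) : ℝ := Real.sqrt 2 / 2 ^ k

lemma eps_pos (k : ℕ) : 0 < eps k := by unfold eps; positivity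

lemma eps_succ (k : ℕ) : eps (k + 1) = eps k / 2 := by unfold eps; rw [pow_succ]; field_simp

lemma eps_zero : eps 0 = Real.sqrt 2 := by simp [eps]

lemma eps_le (k : ℕ) : eps k ≤ Real.sqrt 2 := by
  induction k with
  | zero => rw [eps_zero]
  | succ k ih => rw [eps_succ]; linarith [eps_pos k]

lemma eps_sum (J : ℕ) : ∑ k ∈ Finset.range (J + 1), eps k = 2 * Real.sqrt 2 - eps J := by
  induction J with
  | zero => simp [eps_zero]; ring
  | succ J ih => rw [Finset.sum_range_succ, ih, eps_succ]; ring

def apair {F : Type*} {n : ℕ} (v : F → Fin n → ℝ) (k : ℕ) (ω : F × F) (i : Fin n) : ℝ :=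
  v ω.1 i - (if k = 0 then 0 else v ω.2 i)

def Ak (n k : ℕ) : ℝ := 20 * n * eps k ^ 2

def Phi {F : Type*} [MeasurableSpace F] (π : Measure F) {n : ℕ} (v : F → Fin n → ℝ) (k : ℕ)
    (σ : Fin n → Bool) : ℝ :=
  ∫ ω in {ω | ∑ i, apair v k ω i ^ 2 ≤ Ak n k},
    Real.exp (rad σ (apair v k ω) ^ 2 / (4 * Ak n k)) ∂(π.prod π)

lemma apair_meas {F : Type*} [MeasurableSpace F] {n : ℕ} (v : F → Fin n → ℝ)
    (hv : ∀ i, Measurable fun f => v f i) (k : ℕ) (i : Fin n) :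
    Measurable fun ω => apair v k ω i := by
  unfold apair
  by_cases h : k = 0
  · simp only [h, if_true, sub_zero]
    exact (hv i).comp measurable_fst
  · simp only [h, if_false]
    exact ((hv i).comp measurable_fst).sub ((hv i).comp measurable_snd)

lemma apair_abs {F : Type*} {n : ℕ} (v : F → Fin n → ℝ)
    (hv : ∀ f i, |v f i| ≤ 1) (k : ℕ) (ω : F × F) (i : Fin n) : |apair v k ω i| ≤ 2 := by
  unfold apair
  have h1 := abs_le.1 (hv ω.1 i)
  have h2 := abs_le.1 (hv ω.2 i)
  by_cases h : k = 0
  · simp only [h, if_true, sub_zero]; rw [abs_le]; constructor <;> linarith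
  · simp only [h, if_false]; rw [abs_le]; constructor <;> linarith

lemma chain_avg {F : Type*} [MeasurableSpace F] (π : Measure F) [IsProbabilityMeasure π] {n : ℕ}
    (hn : 1 ≤ n) (v : F → Fin n → ℝ) (hv : ∀ i, Measurable fun f => v f i)
    (hv1 : ∀ f i, |v f i| ≤ 1) (ρ : F → F → ℝ) (hρm : ∀ f, Measurable (ρ f))
    (hρ0 : ∀ f g, 0 ≤ ρ f g) (hρ2 : ∀ f g, ρ f g ≤ Real.sqrt 2)
    (hρv : ∀ f g, ∑ i, (v f i - v g i) ^ 2 ≤ 2 * n * ρ f g ^ 2)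
    (σ : Fin n → Bool) (K : ℕ) (M : ℝ) (hM : 1 < M) (hΦ : ∀ k ≤ K, Phi π v k σ ≤ M) (f : F) :
    ∀ J ≤ K, (∀ j ≤ J, 0 < π.real (mball ρ f (eps j))) →
    (π.real (mball ρ f (eps J)))⁻¹ * ∫ g in mball ρ f (eps J), rad σ (v g) ∂π ≤
      ∑ k ∈ Finset.range (J + 1), Real.sqrt (4 * Ak n k *
        Real.log (M / (π.real (mball ρ f (eps k)) * π.real (mball ρ f (eps (k - 1)))))) := by
  have hn0 : (0 : ℝ) < n := by exact_mod_cast hn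
  have hA : ∀ k, 0 < Ak n k := fun k => by
    have := eps_pos k
    unfold Ak; positivity
  have hB : ∀ k, MeasurableSet (mball ρ f (eps k)) := fun k =>
    measurableSet_le (hρm f) measurable_const
  have hX : Measurable fun g => rad σ (v g) := rad_meas σ v hv
  have hXb : ∀ g, |rad σ (v g)| ≤ n * 1 := fun g => rad_le _ _ _ (hv1 g)
  have hXi : ∀ s : Set F, Integrable (fun g => rad σ (v g)) (π.restrict s) := fun s =>
    bdd_int _ _ hX _ hXb
  -- the one step inequality
  have step : ∀ k ≤ K, (∀ j ≤ k, 0 < π.real (mball ρ f (eps j))) →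
      ∫ ω in mball ρ f (eps k) ×ˢ mball ρ f (eps (k - 1)), rad σ (apair v k ω) ∂(π.prod π) ≤
      (π.real (mball ρ f (eps k)) * π.real (mball ρ f (eps (k - 1)))) *
      Real.sqrt (4 * Ak n k *
        Real.log (M / (π.real (mball ρ f (eps k)) * π.real (mball ρ f (eps (k - 1)))))) := by
    intro k hk hpos
    have hr : (π.prod π).real (mball ρ f (eps k) ×ˢ mball ρ f (eps (k - 1))) =
        π.real (mball ρ f (eps k)) * π.real (mball ρ f (eps (k - 1))) := by
      simp [Measure.real, Measure.prod_prod, ENNReal.toReal_mul]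
    have := pair_step (π.prod π) (fun ω => rad σ (apair v k ω))
      (rad_meas σ _ (apair_meas v hv k)) (n * 2) (Ak n k) M
      (fun ω => rad_le _ _ _ (apair_abs v hv1 k ω)) (hA k) hM
      (mball ρ f (eps k) ×ˢ mball ρ f (eps (k - 1))) {ω | ∑ i, apair v k ω i ^ 2 ≤ Ak n k}
      ?_ (hΦ k hk) ?_
    · rwa [hr] at this
    · rintro ⟨g, h⟩ ⟨hg, hh⟩
      simp only [mball, Set.mem_ofPred_eq] at hg hh ⊢
      rcases Nat.eq_zero_or_pos k with h0 | h0
      · subst h0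
        simp only [apair, if_true, sub_zero, Ak, eps_zero]
        rw [Real.sq_sqrt (by norm_num)]
        calc ∑ i, v g i ^ 2 ≤ ∑ i : Fin n, (1 : ℝ) := Finset.sum_le_sum fun i _ => by
              rw [← sq_abs]; exact pow_le_one₀ (abs_nonneg _) (hv1 g i)
          _ = n := by simp
          _ ≤ _ := by linarith
      · have hk0 : k ≠ 0 := by omega
        simp only [apair, hk0, if_false, Ak]
        obtain ⟨j, rfl⟩ : ∃ j, k = j + 1 := ⟨k - 1, by omega⟩
        simp only [Nat.add_sub_cancel] at hh
        have e1 : eps j = 2 * eps (j + 1) := by rw [eps_succ]; ring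
        rw [e1] at hh
        have q1 : ρ f g ^ 2 ≤ eps (j + 1) ^ 2 := pow_le_pow_left₀ (hρ0 f g) hg 2
        have q2 : ρ f h ^ 2 ≤ (2 * eps (j + 1)) ^ 2 := pow_le_pow_left₀ (hρ0 f h) hh 2
        calc ∑ i, (v g i - v h i) ^ 2
            ≤ ∑ i, (2 * (v f i - v g i) ^ 2 + 2 * (v f i - v h i) ^ 2) :=
              Finset.sum_le_sum fun i _ => by
                nlinarith [sq_nonneg ((v f i - v g i) + (v f i - v h i))]
          _ = 2 * ∑ i, (v f i - v g i) ^ 2 + 2 * ∑ i, (v f i - v h i) ^ 2 := by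
              rw [Finset.sum_add_distrib, Finset.mul_sum, Finset.mul_sum]
          _ ≤ 2 * (2 * n * ρ f g ^ 2) + 2 * (2 * n * ρ f h ^ 2) := by
              gcongr <;> apply hρv
          _ ≤ 2 * (2 * n * eps (j + 1) ^ 2) + 2 * (2 * n * (2 * eps (j + 1)) ^ 2) := by gcongr
          _ = _ := by ring
    · rw [hr]
      exact mul_pos (hpos k le_rfl) (hpos (k - 1) (by omega))
  intro J
  induction J with
  | zero =>
    intro hJ hpos
    have hu : mball ρ f (eps 0) = Set.univ := by
      rw [eps_zero]; exact Set.eq_univ_of_forall fun g => hρ2 f g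
    have := step 0 hJ hpos
    simp only [hu, Nat.zero_sub, zero_add, Finset.sum_range_one, probReal_univ, inv_one, one_mul,
      mul_one, Set.univ_prod_univ, Measure.restrict_univ] at this ⊢
    refine le_trans (le_of_eq ?_) this
    have e : ∀ ω : F × F, rad σ (apair v 0 ω) = rad σ (v ω.1) := fun ω => by
      simp [rad, apair]
    simp only [e]
    rw [integral_fun_fst (fun g => rad σ (v g))]
    simp
  | succ J ih =>
    intro hJ hpos
    rw [Finset.sum_range_succ]
    have i1 := ih (by omega) (fun j hj => hpos j (by omega))
    have st := step (J + 1) hJ hpos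
    simp only [Nat.add_sub_cancel] at st ⊢
    have hm := hpos (J + 1) le_rfl
    have hm' := hpos J (by omega)
    set m := π.real (mball ρ f (eps (J + 1))) with hmd
    set m' := π.real (mball ρ f (eps J)) with hmd'
    set s := Real.sqrt (4 * Ak n (J + 1) * Real.log (M / (m * m')))
    have e : ∀ ω : F × F, rad σ (apair v (J + 1) ω) = rad σ (v ω.1) - rad σ (v ω.2) := fun ω => by
      rw [← rad_sub]
      simp [rad, apair]
    simp only [e] at st
    rw [← Measure.prod_restrict, integral_sub ((hXi _).comp_fst _) ((hXi _).comp_snd _),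
      integral_fun_fst (fun g => rad σ (v g)), integral_fun_snd (fun g => rad σ (v g))] at st
    simp only [smul_eq_mul, measureReal_restrict_apply_univ, ← hmd, ← hmd'] at st
    set I := ∫ g in mball ρ f (eps (J + 1)), rad σ (v g) ∂π
    set I' := ∫ g in mball ρ f (eps J), rad σ (v g) ∂π
    have : m⁻¹ * I - m'⁻¹ * I' ≤ s := by
      have h2 : m⁻¹ * I - m'⁻¹ * I' = (m' * I - m * I') / (m * m') := by field_simp
      rw [h2, div_le_iff₀ (by positivity)]
      linarith
    linarith

lemma chain_fin {F : Type*} [MeasurableSpace F] (π : Measure F) [IsProbabilityMeasure π] {n : ℕ}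
    (v : F → Fin n → ℝ) (hv : ∀ i, Measurable fun f => v f i)
    (hv1 : ∀ f i, |v f i| ≤ 1) (ρ : F → F → ℝ) (hρm : ∀ f, Measurable (ρ f))
    (hρ0 : ∀ f g, 0 ≤ ρ f g)
    (hρv : ∀ f g, ∑ i, (v f i - v g i) ^ 2 ≤ 2 * n * ρ f g ^ 2)
    (σ : Fin n → Bool) (f : F) (e : ℝ) (he : 0 ≤ e) (hpos : 0 < π.real (mball ρ f e)) :
    rad σ (v f) ≤ Real.sqrt 2 * n * e +
      (π.real (mball ρ f e))⁻¹ * ∫ g in mball ρ f e, rad σ (v g) ∂π := by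
  have hB : MeasurableSet (mball ρ f e) := measurableSet_le (hρm f) measurable_const
  have hX : Measurable fun g => rad σ (v g) := rad_meas σ v hv
  have hXi : IntegrableOn (fun g => rad σ (v g)) (mball ρ f e) π :=
    bdd_int _ _ hX _ fun g => rad_le _ _ _ (hv1 g)
  have pw : ∀ g ∈ mball ρ f e, rad σ (v f) - Real.sqrt 2 * n * e ≤ rad σ (v g) := by
    intro g hg
    have h1 : rad σ (v f) - rad σ (v g) ≤ Real.sqrt 2 * n * e := by
      rw [← rad_sub]
      refine le_trans (le_abs_self _) (abs_le_of_sq_le_sq ?_ (by positivity))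
      have cs := Finset.sum_mul_sq_le_sq_mul_sq Finset.univ (fun i => sg (σ i))
        (fun i => v f i - v g i)
      have hs : ∑ i, sg (σ i) ^ 2 = n := by
        simp [← sq_abs (sg _), abs_sg]
      rw [hs] at cs
      refine cs.trans ?_
      have hg' : ρ f g ^ 2 ≤ e ^ 2 := pow_le_pow_left₀ (hρ0 f g) hg 2
      calc (n : ℝ) * ∑ i, (v f i - v g i) ^ 2 ≤ n * (2 * n * ρ f g ^ 2) := by gcongr; apply hρv
        _ ≤ n * (2 * n * e ^ 2) := by gcongr
        _ = (Real.sqrt 2 * n * e) ^ 2 := by rw [mul_pow, mul_pow, Real.sq_sqrt (by norm_num)]; ring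
    linarith
  have := setIntegral_mono_on (integrableOn_const (by simp)) hXi hB pw
  rw [setIntegral_const, smul_eq_mul] at this
  have h2 : rad σ (v f) - Real.sqrt 2 * n * e ≤
      (π.real (mball ρ f e))⁻¹ * ∫ g in mball ρ f e, rad σ (v g) ∂π := by
    rw [← div_eq_inv_mul, le_div_iff₀ hpos]
    linarith
  linarith

lemma sk_bound (n k : ℕ) (M m m' : ℝ) (hM : 1 < M) (hm : 0 < m) (hmm : m ≤ m') (hm1 : m' ≤ 1) :
    Real.sqrt (4 * Ak n k * Real.log (M / (m * m'))) ≤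
      9 * Real.sqrt n * eps k * (Real.sqrt (Real.log M) +
        Real.sqrt 2 * Real.sqrt (Real.log (1 / m))) := by
  have hm' : 0 < m' := lt_of_lt_of_le hm hmm
  have he := eps_pos k
  have hl : Real.log (M / (m * m')) ≤ Real.log M + 2 * Real.log (1 / m) := by
    rw [Real.log_div (by positivity) (by positivity), Real.log_mul hm.ne' hm'.ne', one_div,
      Real.log_inv]
    have := Real.log_le_log hm hmm
    linarith
  have hb : 0 ≤ Real.log (1 / m) := by
    rw [one_div, Real.log_inv]
    have := Real.log_nonpos hm.le (hmm.trans hm1)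
    linarith
  have ha : 0 ≤ Real.log M := Real.log_nonneg hM.le
  set a := Real.log M
  set b := Real.log (1 / m)
  apply Real.sqrt_le_iff.2
  refine ⟨by positivity, ?_⟩
  rw [mul_pow, mul_pow, mul_pow, Real.sq_sqrt (by positivity)]
  unfold Ak
  have h1 : a + 2 * b ≤ (Real.sqrt a + Real.sqrt 2 * Real.sqrt b) ^ 2 := by
    have : 0 ≤ Real.sqrt a * (Real.sqrt 2 * Real.sqrt b) := by positivity
    have h2 : (Real.sqrt 2 * Real.sqrt b) ^ 2 = 2 * b := by
      rw [mul_pow, Real.sq_sqrt (by norm_num), Real.sq_sqrt hb]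
    have h3 := Real.sq_sqrt ha
    nlinarith
  calc 4 * (20 * n * eps k ^ 2) * Real.log (M / (m * m'))
      ≤ 4 * (20 * n * eps k ^ 2) * (a + 2 * b) := by gcongr
    _ ≤ 9 ^ 2 * n * eps k ^ 2 * (a + 2 * b) := by
      have : 0 ≤ (n : ℝ) * eps k ^ 2 * (a + 2 * b) := by positivity
      nlinarith
    _ ≤ _ := by gcongr

lemma negLog_anti {p q : ℝ≥0∞} (h : p ≤ q) (hq : q ≤ 1) : negLog q ≤ negLog p := by
  unfold negLog
  by_cases hp : p = 0
  · simp [hp]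
  · have hq0 : q ≠ 0 := fun h0 => hp (le_antisymm (h0 ▸ h) (zero_le))
    simp only [hp, hq0, if_false]
    have hqt : q ≠ ⊤ := ne_top_of_le_ne_top ENNReal.one_ne_top hq
    have hpt : p ≠ ⊤ := ne_top_of_le_ne_top hqt h
    have h1 : 0 < p.toReal := ENNReal.toReal_pos hp hpt
    have h2 : p.toReal ≤ q.toReal := ENNReal.toReal_mono hqt h
    apply ENNReal.ofReal_le_ofReal
    apply Real.log_le_log
    · have : 0 < q.toReal := by linarith
      positivity
    · exact one_div_le_one_div_of_le h1 h2

lemma negLog_half {p : ℝ≥0∞} (h0 : p ≠ 0) (h1 : p ≤ 1) :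
    negLog p ^ (1 / 2 : ℝ) = ENNReal.ofReal (Real.sqrt (Real.log (1 / p.toReal))) := by
  have hpt : p ≠ ⊤ := ne_top_of_le_ne_top ENNReal.one_ne_top h1
  have hp : 0 < p.toReal := ENNReal.toReal_pos h0 hpt
  have h2 : p.toReal ≤ 1 := by
    have := ENNReal.toReal_mono ENNReal.one_ne_top h1
    simpa using this
  have : 0 ≤ Real.log (1 / p.toReal) := Real.log_nonneg (by rw [le_div_iff₀ hp]; linarith)
  simp only [negLog, h0, if_false]
  rw [ENNReal.ofReal_rpow_of_nonneg this (by norm_num), Real.sqrt_eq_rpow]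

lemma ball_mono {F : Type*} (ρ : F → F → ℝ) (f : F) {a b : ℝ} (h : a ≤ b) :
    mball ρ f a ⊆ mball ρ f b := fun _ hg => le_trans hg h

lemma int_const {F : Type*} [MeasurableSpace F] (π : Measure F) [IsProbabilityMeasure π]
    (ρ : F → F → ℝ) (f : F) (a b : ℝ) :
    ENNReal.ofReal (b - a) * negLog (π (mball ρ f b)) ^ (1 / 2 : ℝ) ≤
      ∫⁻ ε in Set.Ioc a b, negLog (π (mball ρ f ε)) ^ (1 / 2 : ℝ) := by
  calc _ = ∫⁻ ε in Set.Ioc a b, negLog (π (mball ρ f b)) ^ (1 / 2 : ℝ) := by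
        rw [setLIntegral_const, Real.volume_Ioc, mul_comm]
    _ ≤ _ := by
        refine setLIntegral_mono' measurableSet_Ioc fun ε hε => ?_
        exact ENNReal.rpow_le_rpow
          (negLog_anti (measure_mono (ball_mono ρ f hε.2)) prob_le_one) (by norm_num)

lemma int_sum {F : Type*} [MeasurableSpace F] (π : Measure F) [IsProbabilityMeasure π]
    (ρ : F → F → ℝ) (f : F) (J : ℕ) :
    ∑ k ∈ Finset.range (J + 1),
      ENNReal.ofReal (eps k / 2) * negLog (π (mball ρ f (eps k))) ^ (1 / 2 : ℝ) ≤
      ∫⁻ ε in Set.Ioc (eps (J + 1)) (Real.sqrt 2),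
        negLog (π (mball ρ f ε)) ^ (1 / 2 : ℝ) := by
  have one : ∀ k, ENNReal.ofReal (eps k / 2) * negLog (π (mball ρ f (eps k))) ^ (1 / 2 : ℝ) ≤
      ∫⁻ ε in Set.Ioc (eps (k + 1)) (eps k), negLog (π (mball ρ f ε)) ^ (1 / 2 : ℝ) := by
    intro k
    refine le_trans (le_of_eq ?_) (int_const π ρ f _ _)
    congr 2
    rw [eps_succ]; ring
  induction J with
  | zero =>
    rw [Finset.sum_range_one, ← eps_zero]
    exact one 0
  | succ J ih =>
    rw [Finset.sum_range_succ]
    have hlt : eps (J + 1 + 1) ≤ eps (J + 1) := by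
      rw [eps_succ (J + 1)]; linarith [eps_pos (J + 1)]
    rw [← Set.Ioc_union_Ioc_eq_Ioc hlt (eps_le (J + 1)),
      lintegral_union measurableSet_Ioc (by
        rw [Set.disjoint_left]; intro x hx hx'; exact absurd hx.2 (not_le.2 hx'.1)), add_comm]
    exact add_le_add (one (J + 1)) ih

lemma exists_J (α : ℝ) (h : α ≤ eps 1) (K : ℕ) :
    ∃ J ≤ K, α ≤ eps (J + 1) ∧ (J = K ∨ eps (J + 2) < α) := by
  induction K with
  | zero => exact ⟨0, le_rfl, h, Or.inl rfl⟩
  | succ K ih =>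
    obtain ⟨J, hJ, h1, h2⟩ := ih
    rcases h2 with h2 | h2
    · subst h2
      by_cases h3 : α ≤ eps (J + 2)
      · exact ⟨J + 1, le_rfl, h3, Or.inl rfl⟩
      · exact ⟨J, by omega, h1, Or.inr (not_le.1 h3)⟩
    · exact ⟨J, by omega, h1, Or.inr h2⟩

lemma final_bound {F : Type*} [MeasurableSpace F] (π : Measure F) [IsProbabilityMeasure π] {n : ℕ}
    (hn : 1 ≤ n) (v : F → Fin n → ℝ) (hv : ∀ i, Measurable fun f => v f i)
    (hv1 : ∀ f i, |v f i| ≤ 1) (ρ : F → F → ℝ) (hρm : ∀ f, Measurable (ρ f))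
    (hρ0 : ∀ f g, 0 ≤ ρ f g) (hρ2 : ∀ f g, ρ f g ≤ Real.sqrt 2)
    (hρv : ∀ f g, ∑ i, (v f i - v g i) ^ 2 ≤ 2 * n * ρ f g ^ 2)
    (σ : Fin n → Bool) (K : ℕ) (M Λ : ℝ) (hM : 1 < M) (hΦ : ∀ k ≤ K, Phi π v k σ ≤ M)
    (hΛ : 1 / 4 ≤ Λ) (hMΛ : Real.log M ≤ 9 * Λ) (hK : eps K ≤ Real.sqrt 2 / n)
    (f : F) (α : ℝ) (hα : 0 ≤ α) :
    ENNReal.ofReal (rad σ (v f) / n) ≤ ENNReal.ofReal 100 *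
      ((ENNReal.ofReal α + ENNReal.ofReal (1 / Real.sqrt n) *
        ∫⁻ ε in Set.Ioc α (Real.sqrt 2), (negLog (π (mball ρ f ε))) ^ (1 / 2 : ℝ)) +
        ENNReal.ofReal (Real.sqrt (Λ / n))) := by
  have hn0 : (0 : ℝ) < n := by exact_mod_cast hn
  have hn1 : (1 : ℝ) ≤ n := by exact_mod_cast hn
  set t := Real.sqrt 2 with ht
  have ht2 : t ^ 2 = 2 := Real.sq_sqrt (by norm_num)
  have ht0 : 0 < t := Real.sqrt_pos.2 (by norm_num)
  have ht1 : t ≤ 1.415 := by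
    rw [ht]; apply Real.sqrt_le_iff.2; norm_num
  have ht3 : 1 ≤ t := by nlinarith
  by_cases hα1 : α ≤ eps 1
  swap
  · have he1 : eps 1 = t / 2 := by rw [eps_succ, eps_zero]
    rw [he1] at hα1
    push Not at hα1
    have h1 : rad σ (v f) / n ≤ 1 := by
      rw [div_le_iff₀ hn0]
      have := (abs_le.1 (rad_le σ (v f) 1 (hv1 f))).2
      linarith
    calc ENNReal.ofReal (rad σ (v f) / n) ≤ ENNReal.ofReal (100 * α) :=
          ENNReal.ofReal_le_ofReal (by linarith)
      _ = ENNReal.ofReal 100 * ENNReal.ofReal α := ENNReal.ofReal_mul (by norm_num)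
      _ ≤ _ := by
        gcongr
        rw [add_assoc]; exact le_self_add
  obtain ⟨J, hJK, hJ1, hJ2⟩ := exists_J α hα1 K
  set I := ∫⁻ ε in Set.Ioc α t, (negLog (π (mball ρ f ε))) ^ (1 / 2 : ℝ) with hI
  have hsq : 0 < Real.sqrt n := Real.sqrt_pos.2 hn0
  by_cases hIt : I = ⊤
  · rw [hIt, ENNReal.mul_top (by simpa using Nat.lt_of_lt_of_le Nat.zero_lt_one hn), add_top, top_add, ENNReal.mul_top (by simp)]
    exact le_top
  have hsum : ∑ k ∈ Finset.range (J + 1),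
      ENNReal.ofReal (eps k / 2) * negLog (π (mball ρ f (eps k))) ^ (1 / 2 : ℝ) ≤ I :=
    (int_sum π ρ f J).trans (lintegral_mono_set (Set.Ioc_subset_Ioc_left hJ1))
  have hne : ∀ j ≤ J, π (mball ρ f (eps j)) ≠ 0 := by
    intro j hj h0
    apply hIt
    refine top_unique (le_trans (le_of_eq ?_) ((Finset.single_le_sum (f := fun k =>
      ENNReal.ofReal (eps k / 2) * negLog (π (mball ρ f (eps k))) ^ (1 / 2 : ℝ))
      (fun _ _ => zero_le) (Finset.mem_range.2 (show j < J + 1 by omega))).trans hsum))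
    simp only [h0, negLog, if_true]
    rw [ENNReal.top_rpow_of_pos (by norm_num), ENNReal.mul_top]
    simpa using eps_pos j
  have hpos : ∀ j ≤ J, 0 < π.real (mball ρ f (eps j)) := fun j hj =>
    ENNReal.toReal_pos (hne j hj) (measure_ne_top _ _)
  have hsumR : ∑ k ∈ Finset.range (J + 1),
      eps k / 2 * Real.sqrt (Real.log (1 / π.real (mball ρ f (eps k)))) ≤ I.toReal := by
    rw [← ENNReal.ofReal_le_iff_le_toReal hIt, ENNReal.ofReal_sum_of_nonneg
      (fun k _ => mul_nonneg (by linarith [eps_pos k]) (Real.sqrt_nonneg _))]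
    refine le_trans (le_of_eq (Finset.sum_congr rfl fun k hk => ?_)) hsum
    rw [negLog_half (hne k (by have := Finset.mem_range.1 hk; omega)) prob_le_one,
      ENNReal.ofReal_mul (by linarith [eps_pos k])]
    rfl
  have c1 := chain_fin π v hv hv1 ρ hρm hρ0 hρv σ f (eps J) (eps_pos J).le (hpos J le_rfl)
  have c2 := chain_avg π hn v hv hv1 ρ hρm hρ0 hρ2 hρv σ K M hM hΦ f J hJK hpos
  have c3 : ∑ k ∈ Finset.range (J + 1), Real.sqrt (4 * Ak n k *
        Real.log (M / (π.real (mball ρ f (eps k)) * π.real (mball ρ f (eps (k - 1)))))) ≤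
      9 * Real.sqrt n * Real.sqrt (Real.log M) * (2 * t) + 18 * t * Real.sqrt n * I.toReal := by
    calc _ ≤ ∑ k ∈ Finset.range (J + 1), (9 * Real.sqrt n * eps k * (Real.sqrt (Real.log M) +
        t * Real.sqrt (Real.log (1 / π.real (mball ρ f (eps k)))))) := by
          refine Finset.sum_le_sum fun k hk => ?_
          refine sk_bound n k M _ _ hM (hpos k (by have := Finset.mem_range.1 hk; omega)) ?_
            measureReal_le_one
          refine measureReal_mono (ball_mono ρ f ?_)
          cases k with
          | zero => simp
          | succ k => simp only [Nat.add_sub_cancel]; rw [eps_succ]; linarith [eps_pos k]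
      _ = 9 * Real.sqrt n * Real.sqrt (Real.log M) * (∑ k ∈ Finset.range (J + 1), eps k) +
          18 * t * Real.sqrt n * ∑ k ∈ Finset.range (J + 1),
            eps k / 2 * Real.sqrt (Real.log (1 / π.real (mball ρ f (eps k)))) := by
          rw [Finset.mul_sum, Finset.mul_sum, ← Finset.sum_add_distrib]
          refine Finset.sum_congr rfl fun k _ => by ring
      _ ≤ _ := by
          rw [eps_sum]
          gcongr
          linarith [eps_pos J]
  have hΛ0 : 0 ≤ Λ := by linarith
  have c4 : Real.sqrt (Real.log M) ≤ 3 * Real.sqrt Λ := by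
    apply Real.sqrt_le_iff.2
    refine ⟨by positivity, ?_⟩
    rw [mul_pow, Real.sq_sqrt hΛ0]; linarith
  have hΛh : 1 / 2 ≤ Real.sqrt Λ := Real.le_sqrt_of_sq_le (by linarith)
  set r := Real.sqrt n with hr
  have hr2 : r ^ 2 = n := Real.sq_sqrt hn0.le
  have hr1 : 1 ≤ r := Real.one_le_sqrt.2 hn1
  have c5 : t * eps J ≤ 6 * α + 4 * (Real.sqrt Λ / r) := by
    have hd : 0 ≤ Real.sqrt Λ / r := by positivity
    rcases hJ2 with h | h
    · rw [h]
      have h1 : t * eps K ≤ t * (t / n) := by gcongr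
      have h2 : t * (t / n) = 2 / n := by rw [← ht2]; ring
      have h3 : 2 / (n : ℝ) ≤ 4 * (Real.sqrt Λ / r) := by
        rw [← hr2, div_le_iff₀ (by positivity)]
        have : 4 * (Real.sqrt Λ / r) * r ^ 2 = 4 * Real.sqrt Λ * r := by field_simp
        rw [this]; nlinarith
      linarith
    · have h1 : eps J = 4 * eps (J + 2) := by rw [eps_succ (J + 1), eps_succ J]; ring
      rw [h1]
      have := eps_pos (J + 2)
      nlinarith
  have hI0 : 0 ≤ I.toReal := ENNReal.toReal_nonneg
  have main : rad σ (v f) / n ≤ 100 * ((α + 1 / r * I.toReal) + Real.sqrt (Λ / n)) := by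
    rw [Real.sqrt_div hΛ0, ← hr]
    have c6 : rad σ (v f) ≤ t * n * eps J + (9 * r * (3 * Real.sqrt Λ) * (2 * t) +
        18 * t * r * I.toReal) := by
      have : 9 * r * Real.sqrt (Real.log M) * (2 * t) ≤ 9 * r * (3 * Real.sqrt Λ) * (2 * t) := by
        gcongr
      linarith
    have c7 : rad σ (v f) / n ≤ t * eps J + 54 * t * (Real.sqrt Λ / r) +
        18 * t * (1 / r * I.toReal) := by
      rw [div_le_iff₀ hn0]
      refine c6.trans (le_of_eq ?_)
      rw [← hr2]; field_simp; ring
    have p1 : 0 ≤ Real.sqrt Λ / r := by positivity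
    have p2 : 0 ≤ 1 / r * I.toReal := by positivity
    have q1 : 54 * t * (Real.sqrt Λ / r) ≤ 54 * 1.415 * (Real.sqrt Λ / r) := by gcongr
    have q2 : 18 * t * (1 / r * I.toReal) ≤ 18 * 1.415 * (1 / r * I.toReal) := by gcongr
    linarith
  refine (ENNReal.ofReal_le_ofReal main).trans (le_of_eq ?_)
  rw [ENNReal.ofReal_mul (by norm_num), ENNReal.ofReal_add (by positivity) (by positivity),
    ENNReal.ofReal_add hα (by positivity), ENNReal.ofReal_mul (by positivity),
    ENNReal.ofReal_toReal hIt]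

lemma one_case_int {F : Type*} [MeasurableSpace F] (π : Measure F) [IsProbabilityMeasure π]
    (ρ : F → F → ℝ) (f : F) (r : ℝ) (hr : r ≤ Real.sqrt 2)
    (h : π (mball ρ f r) ≤ 1 / 2) (α : ℝ) (hα : 0 ≤ α) :
    ENNReal.ofReal (r / 2) ≤ ENNReal.ofReal α +
      ∫⁻ ε in Set.Ioc α (Real.sqrt 2), (negLog (π (mball ρ f ε))) ^ (1 / 2 : ℝ) := by
  rcases le_total r α with hrα | hrα
  · refine le_trans (ENNReal.ofReal_le_ofReal ?_) le_self_add
    by_cases h0 : 0 ≤ r <;> linarith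
  have h1 : ENNReal.ofReal (1 / 2) ≤ negLog (π (mball ρ f r)) ^ (1 / 2 : ℝ) := by
    calc ENNReal.ofReal (1 / 2) ≤ negLog (1 / 2) ^ (1 / 2 : ℝ) := by
          rw [negLog_half (by simp) (by simp)]
          apply ENNReal.ofReal_le_ofReal
          apply Real.le_sqrt_of_sq_le
          simp
          linarith [Real.log_two_gt_d9]
      _ ≤ _ := ENNReal.rpow_le_rpow (negLog_anti h (by simp)) (by norm_num)
  have h2 := (int_const π ρ f α r).trans (lintegral_mono_set (Set.Ioc_subset_Ioc_right hr))
  calc ENNReal.ofReal (r / 2) ≤ ENNReal.ofReal (α + (r - α) * (1 / 2)) :=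
        ENNReal.ofReal_le_ofReal (by linarith)
    _ = ENNReal.ofReal α + ENNReal.ofReal (r - α) * ENNReal.ofReal (1 / 2) := by
        rw [ENNReal.ofReal_add hα (by linarith), ENNReal.ofReal_mul (by linarith)]
    _ ≤ ENNReal.ofReal α + ENNReal.ofReal (r - α) * negLog (π (mball ρ f r)) ^ (1 / 2 : ℝ) := by
        gcongr
    _ ≤ _ := by gcongr

lemma one_case {F : Type*} [MeasurableSpace F] (π : Measure F) [IsProbabilityMeasure π]
    (v : F → Fin 1 → ℝ)
    (hv1 : ∀ f i, |v f i| ≤ 1) (ρ : F → F → ℝ) (hρm : ∀ f, Measurable (ρ f))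
    (hρ0 : ∀ f g, 0 ≤ ρ f g)
    (hρv : ∀ f g, ∑ i, (v f i - v g i) ^ 2 ≤ 2 * ((1 : ℕ) : ℝ) * ρ f g ^ 2) (b : ℝ≥0∞) :
    ∃ σ : Fin 1 → Bool, ∀ f, ∀ α : ℝ, 0 ≤ α →
    ENNReal.ofReal (rad σ (v f) / ((1 : ℕ) : ℝ)) ≤ ENNReal.ofReal 100 *
      ((ENNReal.ofReal α + ENNReal.ofReal (1 / Real.sqrt ((1 : ℕ) : ℝ)) *
        ∫⁻ ε in Set.Ioc α (Real.sqrt 2), (negLog (π (mball ρ f ε))) ^ (1 / 2 : ℝ)) + b) := by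
  have hs2 : 1 ≤ Real.sqrt 2 := Real.one_le_sqrt.2 (by norm_num)
  have main : ∀ (f : F) (y : ℝ), y ≤ 1 → (0 < y → π (mball ρ f (y / 50)) ≤ 1 / 2) →
      ∀ α : ℝ, 0 ≤ α → ENNReal.ofReal y ≤ ENNReal.ofReal 100 *
      ((ENNReal.ofReal α + ENNReal.ofReal (1 / Real.sqrt ((1 : ℕ) : ℝ)) *
        ∫⁻ ε in Set.Ioc α (Real.sqrt 2), (negLog (π (mball ρ f ε))) ^ (1 / 2 : ℝ)) + b) := by
    intro f y hy1 hy α hα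
    rcases le_or_gt y 0 with h0 | h0
    · rw [ENNReal.ofReal_of_nonpos h0]; exact zero_le
    have := one_case_int π ρ f (y / 50) (by linarith) (hy h0) α hα
    calc ENNReal.ofReal y = ENNReal.ofReal 100 * ENNReal.ofReal (y / 50 / 2) := by
          rw [← ENNReal.ofReal_mul (by norm_num)]; congr 1; ring
      _ ≤ _ := by
          gcongr
          refine this.trans ?_
          simp only [Nat.cast_one, Real.sqrt_one, div_one, ENNReal.ofReal_one, one_mul]
          exact le_self_add
  have cmp : ∀ f g : F, |v f 0 - v g 0| ≤ 2 * ρ f g := by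
    intro f g
    have := hρv f g
    simp at this
    exact abs_le_of_sq_le_sq (by nlinarith [sq_nonneg (ρ f g)]) (by linarith [hρ0 f g])
  by_cases hc : ∀ f, 0 < v f 0 → π (mball ρ f (v f 0 / 50)) ≤ 1 / 2
  · refine ⟨fun _ => false, fun f => ?_⟩
    refine main f _ ?_ ?_
    · simpa [rad, sg] using (abs_le.1 (hv1 f 0)).2
    · simpa [rad, sg] using hc f
  · push Not at hc
    obtain ⟨f, hf, hfm⟩ := hc
    refine ⟨fun _ => true, fun g => ?_⟩
    refine main g _ ?_ ?_
    · have := (abs_le.1 (hv1 g 0)).1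
      simp [rad, sg]; linarith
    · intro hg
      have e : rad (fun _ => true) (v g) / ((1 : ℕ) : ℝ) = - v g 0 := by simp [rad, sg]
      rw [e] at hg ⊢
      by_contra hgm
      push Not at hgm
      have hd : Disjoint (mball ρ f (v f 0 / 50)) (mball ρ g (-v g 0 / 50)) := by
        rw [Set.disjoint_left]
        intro h h1 h2
        have h1 : ρ f h ≤ _ := h1
        have h2 : ρ g h ≤ _ := h2
        have a1 := abs_le.1 (cmp f h)
        have a2 := abs_le.1 (cmp g h)
        linarith [a1.1, a1.2, a2.1, a2.2]
      have hm := measure_union (μ := π) hd (measurableSet_le (hρm g) measurable_const)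
      have h1 : π (mball ρ f (v f 0 / 50) ∪ mball ρ g (-v g 0 / 50)) ≤ 1 := prob_le_one
      rw [hm] at h1
      have := ENNReal.add_lt_add hfm hgm
      rw [ENNReal.add_halves] at this
      exact absurd h1 (not_le.2 this)

lemma metric_meas {Z F : Type*} [MeasurableSpace Z] [MeasurableSpace F] {n : ℕ} (ℓ : F → Z → ℝ)
    (hℓ : Measurable (Function.uncurry ℓ)) (p : (Fin n → Z) × (Fin n → Z)) (f : F) :
    Measurable (mixedMetric ℓ p.1 p.2 f) := by
  have h : ∀ z, Measurable fun g => ℓ g z := fun z => hℓ.comp measurable_prodMk_right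
  unfold mixedMetric
  refine Real.continuous_sqrt.measurable.comp (Measurable.div_const ?_ _)
  exact Finset.measurable_fun_sum _ fun i _ =>
    (((h _).const_sub _).pow_const 2).add (((h _).const_sub _).pow_const 2)

lemma metric_sq {Z F : Type*} {n : ℕ} (ℓ : F → Z → ℝ) (S S' : Fin n → Z) (f g : F) :
    mixedMetric ℓ S S' f g ^ 2 =
      (∑ i, ((ℓ f (S i) - ℓ g (S i)) ^ 2 + (ℓ f (S' i) - ℓ g (S' i)) ^ 2)) / n :=
  Real.sq_sqrt (div_nonneg (Finset.sum_nonneg fun i _ => by positivity) (Nat.cast_nonneg n))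

lemma metric_le {Z F : Type*} {n : ℕ} (hn : 1 ≤ n) (ℓ : F → Z → ℝ)
    (hb : ∀ f z, ℓ f z ∈ Set.Icc (0 : ℝ) 1) (S S' : Fin n → Z) (f g : F) :
    mixedMetric ℓ S S' f g ≤ Real.sqrt 2 := by
  have hn0 : (0 : ℝ) < n := by exact_mod_cast hn
  unfold mixedMetric
  apply Real.sqrt_le_sqrt
  rw [div_le_iff₀ hn0]
  have h1 : ∀ z, (ℓ f z - ℓ g z) ^ 2 ≤ 1 := fun z => by
    have h1 := hb f z
    have h2 := hb g z
    rw [← sq_abs]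
    refine pow_le_one₀ (abs_nonneg _) (abs_le.2 ⟨?_, ?_⟩) <;> linarith [h1.1, h1.2, h2.1, h2.2]
  calc _ ≤ ∑ i : Fin n, (2 : ℝ) := Finset.sum_le_sum fun i _ => by
        linarith [h1 (S i), h1 (S' i)]
    _ = 2 * n := by simp [mul_comm]

lemma metric_v {Z F : Type*} {n : ℕ} (hn : 1 ≤ n) (ℓ : F → Z → ℝ) (S S' : Fin n → Z) (f g : F) :
    ∑ i, ((ℓ f (S' i) - ℓ f (S i)) - (ℓ g (S' i) - ℓ g (S i))) ^ 2 ≤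
      2 * n * mixedMetric ℓ S S' f g ^ 2 := by
  have hn0 : (0 : ℝ) < n := by exact_mod_cast hn
  rw [metric_sq, mul_assoc, mul_div_cancel₀ _ hn0.ne', Finset.mul_sum]
  refine Finset.sum_le_sum fun i _ => ?_
  nlinarith [sq_nonneg ((ℓ f (S' i) - ℓ g (S' i)) + (ℓ f (S i) - ℓ g (S i)))]


/-- **Pointwise Generalization via Ghost Sample** (swap-invariant priors). -/
theorem pointwise_generalization_via_ghost_sample :
    ∃ C : ℝ, 0 < C ∧
      ∀ (Z : Type) (_ : MeasurableSpace Z) (F : Type) (_ : MeasurableSpace F)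
        (P : Measure Z), IsProbabilityMeasure P →
        ∀ (ℓ : F → Z → ℝ), Measurable (Function.uncurry ℓ) →
        (∀ f z, ℓ f z ∈ Set.Icc (0 : ℝ) 1) →
        ∀ n : ℕ, 1 ≤ n →
        ∀ π : (Fin n → Z) → (Fin n → Z) → Measure F,
        (∀ S S', IsProbabilityMeasure (π S S')) →
        (∀ A : Set F, MeasurableSet A →
          Measurable fun p : (Fin n → Z) × (Fin n → Z) => π p.1 p.2 A) →
        (∀ (S S' : Fin n → Z) (i : Fin n),
          π S S' = π (Function.update S i (S' i)) (Function.update S' i (S i))) →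
        ∀ δ : ℝ, δ ∈ Set.Ioo (0 : ℝ) 1 →
        ENNReal.ofReal (1 - δ) ≤
          ((Measure.pi fun _ : Fin n => P).prod (Measure.pi fun _ : Fin n => P))
            {p | ∀ f : F,
              ENNReal.ofReal ((∑ i, ℓ f (p.2 i)) / n - (∑ i, ℓ f (p.1 i)) / n) ≤
                ENNReal.ofReal C *
                  ((⨅ (α : ℝ) (_ : 0 ≤ α),
                      (ENNReal.ofReal α +
                        ENNReal.ofReal (1 / Real.sqrt n) *
                          ∫⁻ ε in Set.Ioc α (Real.sqrt 2),
                            (negLog ((π p.1 p.2)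
                              (mball (mixedMetric ℓ p.1 p.2) f ε))) ^ (1 / 2 : ℝ))) +
                    ENNReal.ofReal (Real.sqrt (Real.log (Real.log (2 * n) / δ) / n)))} := by
  refine ⟨100, by norm_num, ?_⟩
  intro Z _ F _ P hP ℓ hℓ hb n hn π hπ _ hswap δ hδ
  have hn0 : (0 : ℝ) < n := by exact_mod_cast hn
  have hn1 : (1 : ℝ) ≤ n := by exact_mod_cast hn
  obtain ⟨hδ0, hδ1⟩ := hδ
  refine orbit P _ δ fun p => ?_
  have hρm := metric_meas ℓ hℓ p
  have hρ0 : ∀ f g, 0 ≤ mixedMetric ℓ p.1 p.2 f g := fun f g => Real.sqrt_nonneg _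
  have hρ2 := metric_le hn ℓ hb p.1 p.2
  have hρv := metric_v hn ℓ p.1 p.2
  have hv1 : ∀ f i, |ℓ f (p.2 i) - ℓ f (p.1 i)| ≤ 1 := fun f i => by
    have h1 := hb f (p.2 i)
    have h2 := hb f (p.1 i)
    refine abs_le.2 ⟨?_, ?_⟩ <;> linarith [h1.1, h1.2, h2.1, h2.2]
  have hv : ∀ i, Measurable fun f => ℓ f (p.2 i) - ℓ f (p.1 i) := fun i =>
    (hℓ.comp measurable_prodMk_right).sub (hℓ.comp measurable_prodMk_right)
  have hπp := hπ p.1 p.2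
  have red : ∀ σ : Fin n → Bool, (∀ f, ∀ α : ℝ, 0 ≤ α →
      ENNReal.ofReal (rad σ (fun i => ℓ f (p.2 i) - ℓ f (p.1 i)) / n) ≤ ENNReal.ofReal 100 *
      ((ENNReal.ofReal α + ENNReal.ofReal (1 / Real.sqrt n) *
        ∫⁻ ε in Set.Ioc α (Real.sqrt 2),
          (negLog (π p.1 p.2 (mball (mixedMetric ℓ p.1 p.2) f ε))) ^ (1 / 2 : ℝ)) +
        ENNReal.ofReal (Real.sqrt (Real.log (Real.log (2 * n) / δ) / n)))) →
      swp σ p ∈ {p : (Fin n → Z) × (Fin n → Z) | ∀ f : F,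
              ENNReal.ofReal ((∑ i, ℓ f (p.2 i)) / n - (∑ i, ℓ f (p.1 i)) / n) ≤
                ENNReal.ofReal 100 *
                  ((⨅ (α : ℝ) (_ : 0 ≤ α),
                      (ENNReal.ofReal α +
                        ENNReal.ofReal (1 / Real.sqrt n) *
                          ∫⁻ ε in Set.Ioc α (Real.sqrt 2),
                            (negLog ((π p.1 p.2)
                              (mball (mixedMetric ℓ p.1 p.2) f ε))) ^ (1 / 2 : ℝ))) +
                    ENNReal.ofReal (Real.sqrt (Real.log (Real.log (2 * n) / δ) / n)))} := by
    intro σ H f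
    rw [swp_sum, swp_pi π hswap, swp_metric]
    exact ennreal_iInf_help (by simp) (by simp) (H f)
  have hl2 := Real.log_two_gt_d9
  have hl2' := Real.log_two_lt_d9
  have hlog : Real.log 2 ≤ Real.log (2 * n) := Real.log_le_log (by norm_num) (by linarith)
  have hll : 0 < Real.log (2 * n) := by linarith
  by_cases hcase : n = 1 ∧ 1 / 2 ≤ δ
  · obtain ⟨rfl, hδh⟩ := hcase
    obtain ⟨σ, hσ⟩ := one_case (π p.1 p.2) (fun f i => ℓ f (p.2 i) - ℓ f (p.1 i)) hv1
      (mixedMetric ℓ p.1 p.2) hρm hρ0 hρv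
      (ENNReal.ofReal (Real.sqrt (Real.log (Real.log (2 * ((1 : ℕ) : ℝ)) / δ) / ((1 : ℕ) : ℝ))))
    refine ⟨{σ}, ?_, ?_⟩
    · intro τ hτ
      rw [Finset.mem_singleton.1 hτ]
      exact red σ hσ
    · simp; linarith
  · have hbig : 4 / 3 ≤ Real.log (2 * n) / δ := by
      rw [le_div_iff₀ hδ0]
      rcases Nat.lt_or_ge n 2 with h2 | h2
      · have h1 : n = 1 := by omega
        have : δ < 1 / 2 := by
          by_contra h
          exact hcase ⟨h1, not_lt.1 h⟩
        linarith
      · have h2' : (2 : ℝ) ≤ n := by exact_mod_cast h2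
        have h4 : Real.log (2 * 2) ≤ Real.log (2 * n) := Real.log_le_log (by norm_num) (by linarith)
        rw [Real.log_mul (by norm_num) (by norm_num)] at h4
        linarith
    set q := Real.log (2 * n) / δ with hq
    have hq0 : 0 < q := by linarith
    have hΛ : 1 / 4 ≤ Real.log q := by
      have h1 := Real.one_sub_inv_le_log_of_pos hq0
      have h2 : q⁻¹ ≤ (4 / 3 : ℝ)⁻¹ := inv_anti₀ (by norm_num) hbig
      norm_num at h2
      linarith
    have hMΛ : Real.log (5 * q) ≤ 9 * Real.log q := by
      rw [Real.log_mul (by norm_num) hq0.ne']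
      have h5 : Real.log 5 ≤ 2 := by
        have h8 : Real.log 5 ≤ Real.log (2 * 2 * 2) := Real.log_le_log (by norm_num) (by norm_num)
        rw [Real.log_mul (by norm_num) (by norm_num), Real.log_mul (by norm_num) (by norm_num)] at h8
        have h9 := Real.log_le_sub_one_of_pos (show (0 : ℝ) < 5 / 4 by norm_num)
        rw [Real.log_div (by norm_num) (by norm_num),
          show (4 : ℝ) = 2 * 2 by norm_num, Real.log_mul (by norm_num) (by norm_num)] at h9
        linarith
      linarith
    set K := Nat.log 2 (2 * n) with hKd
    have hKlog : (K : ℝ) * Real.log 2 ≤ Real.log (2 * n) := by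
      have := Real.natLog_le_logb (2 * n) 2
      rw [Real.logb, le_div_iff₀ (Real.log_pos (by norm_num))] at this
      push_cast at this
      exact this
    have ht1 : Real.sqrt 2 ≤ 1.415 := by
      apply Real.sqrt_le_iff.2; norm_num
    have hKM : (K + 1) * Real.sqrt 2 ≤ δ * (5 * q) := by
      have e : δ * (5 * q) = 5 * Real.log (2 * n) := by rw [hq]; field_simp
      rw [e]
      have hK0 : (0 : ℝ) ≤ K := Nat.cast_nonneg K
      have h1 : (K + 1) * Real.sqrt 2 ≤ (K + 1) * 1.415 := by gcongr
      nlinarith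
    have hKe : eps K ≤ Real.sqrt 2 / n := by
      have h1 : 2 * n < 2 ^ (K + 1) := Nat.lt_pow_succ_log_self (by norm_num) _
      have h2 : n ≤ 2 ^ K := by rw [pow_succ] at h1; omega
      have h3 : (n : ℝ) ≤ 2 ^ K := by exact_mod_cast h2
      unfold eps
      gcongr
    obtain ⟨s, hs, hc⟩ := good_set (n := n) K
      (Phi (π p.1 p.2) (fun f i => ℓ f (p.2 i) - ℓ f (p.1 i)))
      (fun k σ => integral_nonneg fun ω => (Real.exp_pos _).le)
      (fun k => Phi_sum _ _ (apair_meas _ hv k) 2 (Ak n k) (apair_abs _ hv1 k) (by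
        have := eps_pos k
        unfold Ak; positivity)) (5 * q) δ (by linarith) hKM
    refine ⟨s, fun σ hσ => red σ ?_, hc⟩
    intro f α hα
    exact final_bound (π p.1 p.2) hn _ hv hv1 _ hρm hρ0 hρ2 hρv σ K (5 * q) (Real.log q)
      (by linarith) (hs σ hσ) hΛ hMΛ hKe f α hα

end
end

section
/- Non-Perturbative Feature Expansion (Lemma). Consider a fully connected network with widths d_0,…,d_L, 1-Lipschitz columnwise activations σ_1,…,σ_L, input matrix X ∈ ℝ^{d_0×n}, and feature matrices F_l(·,X). Fix weights W, a radius ε > 0, and nonnegative reals M_1,…,M_L with the following property: for every l ∈ {1,…,L} and every weight tuple W' with ρ_n(W,W') ≤ ε, the outer map G_l^{W'}(A) := σ_L(W'_L · σ_{L−1}(W'_{L−1} · ⋯ σ_{l+1}(W'_{l+1} · A)⋯)) (interpreted as the identity map when l = L) satisfies ‖G_l^{W'}(σ_l(W'_l F_{l−1}(W,X))) − G_l^{W'}(σ_l(W_l F_{l−1}(W,X)))‖_F ≤ M_l · ‖σ_l(W'_l F_{l−1}(W,X)) − σ_l(W_l F_{l−1}(W,X))‖_F. Then for every W' with ρ_n(W,W')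 ≤ ε: ‖F_L(W',X) − F_L(W,X)‖_F² ≤ Σ_{l=1}^L L · M_l² · ‖(W'_l − W_l) · F_{l−1}(W,X)‖_F². -/
open scoped BigOperators

noncomputable section

/-- Squared Frobenius norm of a real matrix. -/
def frobSq {m k : Type*} [Fintype m] [Fintype k] (M : Matrix m k ℝ) : ℝ :=
  ∑ i, ∑ j, M i j ^ 2

/-- Apply a map `g : ℝ^m → ℝ^m` columnwise to a matrix. -/
def mapCols {m k : Type*} [Fintype m] [Fintype k] (g : (m → ℝ) → m → ℝ)
    (M : Matrix m k ℝ) : Matrix m k ℝ :=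
  Matrix.of fun i j => g (fun i' => M i' j) i

/-- Weight tuples of a fully connected network with widths `d 0, d 1, d 2, …`:
the `l`-th weight matrix maps `ℝ^{d l}` to `ℝ^{d (l+1)}`. -/
def Weights (d : ℕ → ℕ) : Type :=
  (l : ℕ) → Matrix (Fin (d (l + 1))) (Fin (d l)) ℝ

/-- The feature matrices of the network: `F_0 = X`, `F_{l+1} = σ_l(W_l F_l)`. -/
def feat (d : ℕ → ℕ) (nn : ℕ) (σ : (l : ℕ) → ((Fin (d (l + 1)) → ℝ) → Fin (d (l + 1)) → ℝ))
    (W : Weights d) (X : Matrix (Fin (d 0)) (Fin nn) ℝ) :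
    (l : ℕ) → Matrix (Fin (d l)) (Fin nn) ℝ
  | 0 => X
  | l + 1 => mapCols (σ l) (W l * feat d nn σ W X l)

/-- Propagation of an arbitrary matrix `A` (sitting at layer `start`) through the layers
`start, start+1, …` of the network; after `k` steps it gives a matrix at layer `start + k`. -/
def iterNet (d : ℕ → ℕ) (nn : ℕ) (σ : (l : ℕ) → ((Fin (d (l + 1)) → ℝ) → Fin (d (l + 1)) → ℝ))
    (W : Weights d) (start : ℕ) (A : Matrix (Fin (d start)) (Fin nn) ℝ) :
    (k : ℕ) → Matrix (Fin (d (start + k))) (Fin nn) ℝ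
  | 0 => A
  | k + 1 => mapCols (σ (start + k)) (W (start + k) * iterNet d nn σ W start A k)

/-- The empirical network metric `ρ_n(W,W') = ‖F_L(W,X) − F_L(W',X)‖_F / √n`. -/
def rhoN (d : ℕ → ℕ) (L nn : ℕ) (σ : (l : ℕ) → ((Fin (d (l + 1)) → ℝ) → Fin (d (l + 1)) → ℝ))
    (X : Matrix (Fin (d 0)) (Fin nn) ℝ) (W W' : Weights d) : ℝ :=
  Real.sqrt (frobSq (feat d nn σ W X L - feat d nn σ W' X L) / nn)

theorem frobSq_nonneg_aux {m k : Type*} [Fintype m] [Fintype k] (A : Matrix m k ℝ) :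
    0 ≤ frobSq A :=
  Finset.sum_nonneg fun _ _ => Finset.sum_nonneg fun _ _ => sq_nonneg _

theorem frobSq_sum_le {m k : Type*} [Fintype m] [Fintype k] (L : ℕ) (v : ℕ → Matrix m k ℝ) :
    frobSq (∑ j ∈ Finset.range L, v j) ≤ ∑ j ∈ Finset.range L, (L : ℝ) * frobSq (v j) := by
  unfold frobSq
  rw [← Finset.mul_sum]
  have e : ∑ c ∈ Finset.range L, ∑ i, ∑ j, v c i j ^ 2
      = ∑ i, ∑ j, ∑ c ∈ Finset.range L, v c i j ^ 2 := by
    rw [Finset.sum_comm]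
    exact Finset.sum_congr rfl fun i _ => Finset.sum_comm
  rw [e, Finset.mul_sum]
  refine Finset.sum_le_sum fun i _ => ?_
  rw [Finset.mul_sum]
  refine Finset.sum_le_sum fun j _ => ?_
  rw [Matrix.sum_apply]
  have := sq_sum_le_card_mul_sum_sq (s := Finset.range L) (f := fun c => v c i j)
  simpa using this

theorem frobSq_mapCols_le {m k : Type*} [Fintype m] [Fintype k] (g : (m → ℝ) → m → ℝ)
    (hg : ∀ u v : m → ℝ, ∑ i, (g u i - g v i) ^ 2 ≤ ∑ i, (u i - v i) ^ 2)
    (A B : Matrix m k ℝ) : frobSq (mapCols g A - mapCols g B) ≤ frobSq (A - B) := by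
  unfold frobSq
  rw [Finset.sum_comm, Finset.sum_comm (f := fun i j => (A - B) i j ^ 2)]
  refine Finset.sum_le_sum fun j _ => ?_
  exact hg (fun i => A i j) (fun i => B i j)

def outNet (d : ℕ → ℕ) (nn : ℕ) (σ : (l : ℕ) → ((Fin (d (l + 1)) → ℝ) → Fin (d (l + 1)) → ℝ))
    (W : Weights d) (j k L : ℕ) (h : j + k = L) (A : Matrix (Fin (d j)) (Fin nn) ℝ) :
    Matrix (Fin (d L)) (Fin nn) ℝ :=
  h ▸ iterNet d nn σ W j A k

theorem outNet_step (d : ℕ → ℕ) (nn : ℕ)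
    (σ : (l : ℕ) → ((Fin (d (l + 1)) → ℝ) → Fin (d (l + 1)) → ℝ))
    (W : Weights d) (j k L : ℕ) (h : j + (k + 1) = L + 1) (h' : j + k = L)
    (A : Matrix (Fin (d j)) (Fin nn) ℝ) :
    outNet d nn σ W j (k + 1) (L + 1) h A = mapCols (σ L) (W L * outNet d nn σ W j k L h' A) := by
  subst h'
  rfl

theorem outNet_succ (d : ℕ → ℕ) (nn : ℕ)
    (σ : (l : ℕ) → ((Fin (d (l + 1)) → ℝ) → Fin (d (l + 1)) → ℝ))
    (W : Weights d) (j k : ℕ) (A : Matrix (Fin (d j)) (Fin nn) ℝ) :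
    ∀ (L : ℕ) (h : j + (k + 1) = L) (h' : j + 1 + k = L),
    outNet d nn σ W j (k + 1) L h A =
      outNet d nn σ W (j + 1) k L h' (mapCols (σ j) (W j * A)) := by
  induction k with
  | zero =>
    intro L h h'
    subst h
    rfl
  | succ k ih =>
    intro L h h'
    obtain ⟨L, rfl⟩ : ∃ L', L = L' + 1 := ⟨L - 1, by omega⟩
    rw [outNet_step d nn σ W j (k + 1) L h (by omega), ih L (by omega) (by omega),
      outNet_step d nn σ W (j + 1) k L h' (by omega)]

theorem outNet_feat (d : ℕ → ℕ) (nn : ℕ)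
    (σ : (l : ℕ) → ((Fin (d (l + 1)) → ℝ) → Fin (d (l + 1)) → ℝ))
    (W : Weights d) (X : Matrix (Fin (d 0)) (Fin nn) ℝ) :
    ∀ (L : ℕ) (h : 0 + L = L), outNet d nn σ W 0 L L h X = feat d nn σ W X L := by
  intro L
  induction L with
  | zero => intro h; rfl
  | succ L ih =>
    intro h
    rw [outNet_step d nn σ W 0 L L h (by omega), ih]
    rfl

theorem frobSq_outNet (d : ℕ → ℕ) (nn : ℕ)
    (σ : (l : ℕ) → ((Fin (d (l + 1)) → ℝ) → Fin (d (l + 1)) → ℝ))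
    (W : Weights d) (j k L : ℕ) (h : j + k = L) (A B : Matrix (Fin (d j)) (Fin nn) ℝ) :
    frobSq (outNet d nn σ W j k L h A - outNet d nn σ W j k L h B) =
      frobSq (iterNet d nn σ W j A k - iterNet d nn σ W j B k) := by
  subst h
  rfl

/-- **Non-Perturbative Feature Expansion (Lemma).** -/
theorem nonperturbative_feature_expansion
    (d : ℕ → ℕ) (L nn : ℕ) (hL : 1 ≤ L) (hn : 1 ≤ nn)
    (σ : (l : ℕ) → ((Fin (d (l + 1)) → ℝ) → Fin (d (l + 1)) → ℝ))
    (hσ : ∀ (l : ℕ) (u v : Fin (d (l + 1)) → ℝ),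
      ∑ i, (σ l u i - σ l v i) ^ 2 ≤ ∑ i, (u i - v i) ^ 2)
    (X : Matrix (Fin (d 0)) (Fin nn) ℝ)
    (W : Weights d) (ε : ℝ) (hε : 0 < ε)
    (M : ℕ → ℝ) (hM : ∀ l, 0 ≤ M l)
    (hloc : ∀ W' : Weights d, rhoN d L nn σ X W W' ≤ ε → ∀ j, j < L →
      Real.sqrt (frobSq
          (iterNet d nn σ W' (j + 1) (mapCols (σ j) (W' j * feat d nn σ W X j)) (L - (j + 1)) -
            iterNet d nn σ W' (j + 1) (mapCols (σ j) (W j * feat d nn σ W X j)) (L - (j + 1)))) ≤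
        M j * Real.sqrt (frobSq
          (mapCols (σ j) (W' j * feat d nn σ W X j) -
            mapCols (σ j) (W j * feat d nn σ W X j)))) :
    ∀ W' : Weights d, rhoN d L nn σ X W W' ≤ ε →
      frobSq (feat d nn σ W' X L - feat d nn σ W X L) ≤
        ∑ j ∈ Finset.range L, (L : ℝ) * M j ^ 2 * frobSq ((W' j - W j) * feat d nn σ W X j) := by
  intro W' hW'
  let T : ℕ → Matrix (Fin (d L)) (Fin nn) ℝ := fun j =>
    if h : j ≤ L then outNet d nn σ W' j (L - j) L (by omega) (feat d nn σ W X j) else 0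
  have hT0 : T 0 = feat d nn σ W' X L := by
    have : T 0 = outNet d nn σ W' 0 L L (by omega) (feat d nn σ W X 0) := by
      simp only [T, Nat.zero_le, dif_pos]
      rfl
    rw [this]
    exact outNet_feat d nn σ W' X L _
  have hTL : T L = feat d nn σ W X L := by
    have key : ∀ (k : ℕ) (h : L + k = L), k = 0 →
        outNet d nn σ W' L k L h (feat d nn σ W X L) = feat d nn σ W X L := by
      intro k h hk
      subst hk
      rfl
    simp only [T, le_refl, dif_pos]
    exact key _ _ (by omega)
  have hsum : feat d nn σ W' X L - feat d nn σ W X L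
      = ∑ j ∈ Finset.range L, (T j - T (j + 1)) := by
    rw [Finset.sum_range_sub', hT0, hTL]
  rw [hsum]
  refine (frobSq_sum_le L _).trans (Finset.sum_le_sum fun j hj => ?_)
  have hj : j < L := Finset.mem_range.mp hj
  rw [mul_assoc]
  refine mul_le_mul_of_nonneg_left ?_ (Nat.cast_nonneg L)
  have e1 : T j = outNet d nn σ W' (j + 1) (L - (j + 1)) L (by omega)
      (mapCols (σ j) (W' j * feat d nn σ W X j)) := by
    have key : ∀ (k : ℕ) (h : j + k = L) (hk : k = (L - (j + 1)) + 1),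
        outNet d nn σ W' j k L h (feat d nn σ W X j) =
        outNet d nn σ W' (j + 1) (L - (j + 1)) L (by omega)
          (mapCols (σ j) (W' j * feat d nn σ W X j)) := by
      intro k h hk
      subst hk
      exact outNet_succ d nn σ W' j _ _ L _ _
    simp only [T, hj.le, dif_pos]
    exact key _ _ (by omega)
  have e2 : T (j + 1) = outNet d nn σ W' (j + 1) (L - (j + 1)) L (by omega)
      (mapCols (σ j) (W j * feat d nn σ W X j)) := by
    simp only [T, Nat.succ_le_of_lt hj, dif_pos]
    rfl
  rw [e1, e2, frobSq_outNet]
  have h1 := hloc W' hW' j hj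
  have h2 := pow_le_pow_left₀ (Real.sqrt_nonneg _) h1 2
  rw [mul_pow, Real.sq_sqrt (frobSq_nonneg_aux _), Real.sq_sqrt (frobSq_nonneg_aux _)] at h2
  refine h2.trans (mul_le_mul_of_nonneg_left ?_ (sq_nonneg _))
  rw [Matrix.sub_mul]
  exact frobSq_mapCols_le _ (hσ j) _ _

end
end
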